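/- Let a ∈ (−1,1) and b > 1. A function g ∈ X_{a,b} satisfies L[g] = 0 almost everywhere on (0,∞) if and only if there is a constant c ∈ ℝ such that g(x) = c (1−x) e^{−x} for almost every x > 0; i.e. the kernel of L on X_{a,b} is the one-dimensional span of m₁(x) = (1−x)e^{−x}. -/

import Mathlib

open MeasureTheory Real Set Filter

noncomputable def weight (a b x : ℝ) : ℝ := if x ≤ 1 then x ^ a else x ^ b

noncomputable def Xnorm (a b : ℝ) (g : ℝ → ℝ) : ℝ :=
  ∫ x in Ioi (0:ℝ), |g x| * weight a b x

def MemX (a b : ℝ) (g : ℝ → ℝ) : Prop :=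
  IntegrableOn (fun x => g x * weight a b x) (Ioi 0)

noncomputable def Kern (ε : ℝ) (W : ℝ → ℝ → ℝ) (x y : ℝ) : ℝ := 2 + ε * W x y

def GoodW (α : ℝ) (W : ℝ → ℝ → ℝ) : Prop :=
  ContinuousOn (fun p : ℝ × ℝ => W p.1 p.2) (Ioi 0 ×ˢ Ioi 0) ∧
  (∀ x y : ℝ, 0 < x → 0 < y → W x y = W y x) ∧
  (∀ l x y : ℝ, 0 < l → 0 < x → 0 < y → W (l * x) (l * y) = W x y) ∧
  (∀ x y : ℝ, 0 < x → 0 < y → 0 ≤ W x y ∧ W x y ≤ (x / y) ^ α + (y / x) ^ α)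

def IsProfile (K : ℝ → ℝ → ℝ) (φ : ℝ → ℝ) : Prop :=
  LocallyIntegrableOn φ (Ioi 0) ∧
  (∀ᵐ x ∂(volume.restrict (Ioi (0:ℝ))), 0 ≤ φ x) ∧
  IntegrableOn (fun x => x * φ x) (Ioi 0) ∧
  (∀ᵐ x ∂(volume.restrict (Ioi (0:ℝ))),
    x ^ 2 * φ x = ∫ y in Ioo 0 x, ∫ z in Ioi (x - y), y * K y z * φ y * φ z)

def IsNormalised (φ : ℝ → ℝ) : Prop := ∫ x in Ioi (0:ℝ), x * φ x = 1

noncomputable def Lop (g : ℝ → ℝ) (x : ℝ) : ℝ :=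
  g x - (2 / x ^ 2) *
    ∫ y in Ioo 0 x, ∫ z in Ioi (x - y), (y * exp (-y) * g z + y * g y * exp (-z))

/-! Put `G(x) = ∫_x^∞ g` and `Q(x) = ∫_0^x e^{t-x} G(t) dt`. Fubini's theorem turns `L[g] = 0` into
`g = (2/x²) ((1 + x) Q - x G)`, so `(G, Q)` solves a linear system `G' = -g`, `Q' = G - Q` of
ordinary differential equations. The function `G - 2Q/x` is a first integral. It vanishes because
`G → 0` at infinity and `Q` is bounded by `∫ min(z,1) |g(z)| dz`. Hence `Q' = (2/x - 1) Q`, which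
gives `Q = k x² e^{-x}`, `G = 2k x e^{-x}` and `g = -2k (1 - x) e^{-x}`. -/

section Weight

variable {a b x : ℝ} {g : ℝ → ℝ}

lemma weight_pos (a b : ℝ) (hx : 0 < x) : 0 < weight a b x := by
  unfold weight
  split_ifs <;> positivity

lemma measurable_weight (a b : ℝ) : Measurable (weight a b) := by
  unfold weight
  exact Measurable.ite measurableSet_Iic (by fun_prop) (by fun_prop)

lemma min_one_le_weight (ha : a ≤ 1) (hb : 0 ≤ b) (hx : 0 < x) : min x 1 ≤ weight a b x := by
  unfold weight
  split_ifs with h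
  · calc min x 1 ≤ x := min_le_left _ _
      _ = x ^ (1 : ℝ) := (rpow_one x).symm
      _ ≤ x ^ a := rpow_le_rpow_of_exponent_ge hx h ha
  · calc min x 1 ≤ 1 := min_le_right _ _
      _ ≤ x ^ b := one_le_rpow (not_le.1 h).le hb

lemma MemX.integrableOn_min_one_mul (hg : MemX a b g) (ha : a ≤ 1) (hb : 0 ≤ b) :
    IntegrableOn (fun x => min x 1 * g x) (Ioi 0) := by
  have hbdd : ∀ᵐ x ∂volume.restrict (Ioi (0 : ℝ)), ‖min x 1 / weight a b x‖ ≤ 1 := by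
    filter_upwards [ae_restrict_mem measurableSet_Ioi] with x (hx : 0 < x)
    have hw := weight_pos a b hx
    rw [norm_of_nonneg (by positivity), div_le_one hw]
    exact min_one_le_weight ha hb hx
  have hmeas : Measurable fun x => min x 1 / weight a b x :=
    (measurable_id.min measurable_const).div (measurable_weight a b)
  refine (hg.bdd_mul hmeas.aestronglyMeasurable hbdd).congr ?_
  filter_upwards [ae_restrict_mem measurableSet_Ioi] with x hx
  have := (weight_pos a b hx).ne'
  field_simp

end Weight

section Tail

open scoped Topology

variable {E : Type*} [NormedAddCommGroup E] [NormedSpace ℝ E] {g : ℝ → E} {t x z : ℝ}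

lemma min_le_max_one_mul_min_one (x : ℝ) (hz : 0 < z) : min z x ≤ max x 1 * min z 1 := by
  rcases le_total z 1 with h | h
  · rw [min_eq_left h]
    exact (min_le_left _ _).trans (le_mul_of_one_le_left hz.le (le_max_right _ _))
  · rw [min_eq_right h, mul_one]
    exact (min_le_right _ _).trans (le_max_left _ _)

lemma integrableOn_smul_of_abs_le_mul_min_one {φ : ℝ → ℝ} {s : Set ℝ} {C : ℝ}
    (hg : IntegrableOn (fun z => min z 1 • g z) (Ioi 0)) (hφ : Measurable φ)
    (hs : MeasurableSet s) (hs₀ : s ⊆ Ioi 0) (hC : ∀ z ∈ s, |φ z| ≤ C * min z 1) :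
    IntegrableOn (fun z => φ z • g z) s := by
  have hpos : ∀ z ∈ s, 0 < min z 1 := fun z hz => lt_min (hs₀ hz) one_pos
  have hbdd : ∀ᵐ z ∂volume.restrict s, ‖φ z / min z 1‖ ≤ C := by
    filter_upwards [ae_restrict_mem hs] with z hz
    rw [norm_div, norm_of_nonneg (hpos z hz).le, div_le_iff₀ (hpos z hz)]
    exact hC z hz
  have hmeas : Measurable fun z => φ z / min z 1 :=
    hφ.div (measurable_id.min measurable_const)
  refine ((hg.mono_set hs₀).bdd_smul C hmeas.aestronglyMeasurable hbdd).congr ?_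
  filter_upwards [ae_restrict_mem hs] with z hz
  rw [Pi.smul_apply', smul_smul, div_mul_cancel₀ _ (hpos z hz).ne']

lemma integrableOn_Ioi_of_min_one_smul (hg : IntegrableOn (fun z => min z 1 • g z) (Ioi 0))
    (ht : 0 < t) : IntegrableOn g (Ioi t) := by
  have ht₁ : 0 < min t 1 := lt_min ht one_pos
  have := integrableOn_smul_of_abs_le_mul_min_one (φ := 1) (C := (min t 1)⁻¹) hg
    measurable_one measurableSet_Ioi (Ioi_subset_Ioi ht.le) fun z hz => by
      rw [Pi.one_apply, abs_one, inv_mul_eq_div, one_le_div ht₁]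
      exact min_le_min_right 1 (le_of_lt hz)
  simpa only [Pi.one_apply, one_smul] using this

lemma aestronglyMeasurable_of_min_one_smul
    (hg : IntegrableOn (fun z => min z 1 • g z) (Ioi 0)) :
    AEStronglyMeasurable g (volume.restrict (Ioi 0)) := by
  have hmeas : Measurable fun z : ℝ => (min z 1)⁻¹ := (measurable_id.min measurable_const).inv
  refine (hmeas.aestronglyMeasurable.smul hg.aestronglyMeasurable).congr ?_
  filter_upwards [ae_restrict_mem measurableSet_Ioi] with z hz
  rw [Pi.smul_apply', inv_smul_smul₀ (lt_min hz one_pos).ne']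

/-- The tail `G(t) = ∫_t^∞ g`, used for `t > 0`: at `t = 0` the integral need not converge. -/
noncomputable def tailIntegral (g : ℝ → E) (t : ℝ) : E := ∫ z in Ioi t, g z

lemma tendsto_tailIntegral_atTop (g : ℝ → E) : Tendsto (tailIntegral g) atTop (𝓝 0) :=
  tendsto_integral_Ioi_zero tendsto_id

lemma continuousOn_tailIntegral (hg : IntegrableOn (fun z => min z 1 • g z) (Ioi 0)) :
    ContinuousOn (tailIntegral g) (Ioi 0) := fun t ht =>
  have ht₂ : 0 < t / 2 := half_pos ht
  ((integrableOn_Ioi_of_min_one_smul hg ht₂).continuousOn_Ici_primitive_Ioi.continuousAt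
    (Ici_mem_nhds (half_lt_self ht))).continuousWithinAt

lemma hasDerivAt_tailIntegral_of_ae_eq [CompleteSpace E] {γ : ℝ → E}
    (hg : IntegrableOn (fun z => min z 1 • g z) (Ioi 0)) (hγ : ContinuousOn γ (Ioi 0))
    (hgγ : ∀ᵐ z ∂volume.restrict (Ioi 0), g z = γ z) (ht : 0 < t) :
    HasDerivAt (tailIntegral g) (-γ t) t := by
  have h_uIcc : ∀ {s : ℝ}, 0 < s → uIcc t s ⊆ Ioi 0 := fun hs z hz => (lt_min ht hs).trans_le hz.1
  have h_eq : ∀ s, 0 < s → tailIntegral g s = tailIntegral g t - ∫ z in t..s, γ z := by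
    intro s hs
    have h_split := intervalIntegral.integral_interval_add_Ioi
      (integrableOn_Ioi_of_min_one_smul hg ht) (integrableOn_Ioi_of_min_one_smul hg hs)
    have h_congr : ∫ z in t..s, g z = ∫ z in t..s, γ z :=
      intervalIntegral.integral_congr_ae_restrict <|
        ae_restrict_of_ae_restrict_of_subset (uIoc_subset_uIcc.trans (h_uIcc hs)) hgγ
    rw [tailIntegral, tailIntegral, ← h_split, h_congr, add_sub_cancel_left]
  have h_deriv : HasDerivAt (fun s => tailIntegral g t - ∫ z in t..s, γ z) (-γ t) t :=
    (intervalIntegral.integral_hasDerivAt_right (hγ.mono (h_uIcc ht)).intervalIntegrable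
      (hγ.stronglyMeasurableAtFilter isOpen_Ioi t ht)
      (hγ.continuousAt (Ioi_mem_nhds ht))).const_sub _
  refine h_deriv.congr_of_eventuallyEq ?_
  filter_upwards [Ioi_mem_nhds ht] with s hs using h_eq s hs

/-- The kernel `1_{t < z} g(z)` on `(0,x) × (0,∞)`. Its integral in `z` is the tail `∫_t^∞ g` and
its integral in `t` is `min(z,x) g(z)`, so Fubini's theorem turns integrals against tails of `g`
into integrals against `g`. -/
noncomputable def tailKernel {F : Type*} [Zero F] (g : ℝ → F) (t z : ℝ) : F :=
  (Iio z).indicator (fun _ => g z) t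

lemma setIntegral_tailKernel (g : ℝ → E) (ht : 0 ≤ t) :
    ∫ z in Ioi 0, tailKernel g t z = tailIntegral g t := by
  have h_ind : tailKernel g t = (Ioi t).indicator g := by
    ext z
    simp only [tailKernel, indicator, mem_Iio, mem_Ioi]
  rw [h_ind, setIntegral_indicator measurableSet_Ioi, Ioi_inter_Ioi, sup_eq_right.2 ht,
    tailIntegral]

lemma integral_smul_tailKernel [CompleteSpace E] (g : ℝ → E) (φ : ℝ → ℝ) (hx : 0 ≤ x)
    (hz : 0 ≤ z) :
    ∫ t in 0..x, φ t • tailKernel g t z = (∫ t in 0..min z x, φ t) • g z := by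
  have h_inter : (Ioo 0 x ∩ Iio z : Set ℝ) = Ioo 0 (min z x) := by
    ext t
    simp only [mem_inter_iff, mem_Ioo, mem_Iio, lt_min_iff]
    tauto
  have h_ind : ∀ t, φ t • tailKernel g t z = (Iio z).indicator (fun t => φ t • g z) t := by
    intro t
    rw [tailKernel, indicator_smul_apply]
  simp only [h_ind]
  rw [intervalIntegral.integral_of_le hx, integral_Ioc_eq_integral_Ioo,
    setIntegral_indicator measurableSet_Iio, h_inter, ← integral_Ioc_eq_integral_Ioo,
    ← intervalIntegral.integral_of_le (le_min hz hx), intervalIntegral.integral_smul_const]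

lemma integrable_tailKernel (hg : IntegrableOn (fun z => min z 1 • g z) (Ioi 0)) (hx : 0 ≤ x) :
    Integrable (Function.uncurry (tailKernel g))
      ((volume.restrict (uIoc 0 x)).prod (volume.restrict (Ioi 0))) := by
  have hmeas : AEStronglyMeasurable (Function.uncurry (tailKernel g))
      ((volume.restrict (uIoc 0 x)).prod (volume.restrict (Ioi 0))) :=
    (aestronglyMeasurable_of_min_one_smul hg).comp_snd.indicator
      (measurableSet_lt measurable_fst measurable_snd)
  have h_norm : ∀ t z, ‖tailKernel g t z‖ = tailKernel (fun z => ‖g z‖) t z := fun t z =>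
    norm_indicator_eq_indicator_norm _ _
  have h_marginal : ∀ z ∈ Ioi (0 : ℝ), ∫ t in uIoc 0 x, ‖tailKernel g t z‖ = min z x * ‖g z‖ := by
    intro z (hz : 0 < z)
    have h := integral_smul_tailKernel (fun z => ‖g z‖) 1 hx hz.le
    simp only [Pi.one_apply, intervalIntegral.integral_const, sub_zero, smul_eq_mul, one_mul,
      mul_one] at h
    simpa only [h_norm, uIoc_of_le hx, intervalIntegral.integral_of_le hx] using h
  have h_min : IntegrableOn (fun z => min z x • g z) (Ioi 0) :=
    integrableOn_smul_of_abs_le_mul_min_one (C := max x 1) hg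
      (measurable_id.min measurable_const) measurableSet_Ioi subset_rfl fun z (hz : 0 < z) => by
        rw [abs_of_nonneg (le_min hz.le hx)]
        exact min_le_max_one_mul_min_one x hz
  rw [integrable_prod_iff' hmeas]
  refine ⟨ae_of_all _ fun z => ?_, h_min.norm.congr ?_⟩
  · have h_const : IntegrableOn (fun _ => g z) (uIoc 0 x) :=
      integrableOn_const measure_Ioc_lt_top.ne
    exact h_const.indicator measurableSet_Iio
  · filter_upwards [ae_restrict_mem measurableSet_Ioi] with z hz
    rw [Function.uncurry_def, h_marginal z hz, norm_smul, norm_of_nonneg (le_min (le_of_lt hz) hx)]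

lemma intervalIntegrable_tailIntegral (hg : IntegrableOn (fun z => min z 1 • g z) (Ioi 0))
    (hx : 0 ≤ x) : IntervalIntegrable (tailIntegral g) volume 0 x := by
  rw [intervalIntegrable_iff]
  refine (integrable_tailKernel hg hx).integral_prod_left.congr ?_
  filter_upwards [ae_restrict_mem measurableSet_uIoc] with t ht
  rw [uIoc_of_le hx] at ht
  exact setIntegral_tailKernel g ht.1.le

section Fubini

variable {φ : ℝ → ℝ}

lemma integrable_smul_tailKernel (hg : IntegrableOn (fun z => min z 1 • g z) (Ioi 0))
    (hφ : Continuous φ) (hx : 0 ≤ x) :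
    Integrable (Function.uncurry fun t z => φ t • tailKernel g t z)
      ((volume.restrict (uIoc 0 x)).prod (volume.restrict (Ioi 0))) := by
  obtain ⟨C, hC⟩ := (isCompact_Icc (a := 0) (b := x)).exists_bound_of_continuousOn hφ.continuousOn
  have h_mem : ∀ᵐ p ∂(volume.restrict (uIoc 0 x)).prod (volume.restrict (Ioi (0 : ℝ))),
      p.1 ∈ uIoc 0 x :=
    Measure.quasiMeasurePreserving_fst.ae (ae_restrict_mem measurableSet_uIoc)
  refine (integrable_tailKernel hg hx).bdd_smul C
    (hφ.comp continuous_fst).aestronglyMeasurable ?_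
  filter_upwards [h_mem] with p hp
  rw [uIoc_of_le hx] at hp
  exact hC p.1 (Ioc_subset_Icc_self hp)

variable [CompleteSpace E]

lemma integrableOn_primitive_smul (hg : IntegrableOn (fun z => min z 1 • g z) (Ioi 0))
    (hφ : Continuous φ) (hx : 0 ≤ x) :
    IntegrableOn (fun z => (∫ t in 0..min z x, φ t) • g z) (Ioi 0) := by
  refine (integrable_smul_tailKernel hg hφ hx).integral_prod_right.congr ?_
  filter_upwards [ae_restrict_mem measurableSet_Ioi] with z hz
  rw [← integral_smul_tailKernel g φ hx (le_of_lt hz), uIoc_of_le hx,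
    intervalIntegral.integral_of_le hx]
  rfl

theorem integral_smul_tailIntegral (hg : IntegrableOn (fun z => min z 1 • g z) (Ioi 0))
    (hφ : Continuous φ) (hx : 0 ≤ x) :
    ∫ t in 0..x, φ t • tailIntegral g t = ∫ z in Ioi 0, (∫ t in 0..min z x, φ t) • g z := by
  calc ∫ t in 0..x, φ t • tailIntegral g t
      = ∫ t in 0..x, ∫ z in Ioi 0, φ t • tailKernel g t z := by
        refine intervalIntegral.integral_congr fun t ht => ?_
        rw [uIcc_of_le hx] at ht
        simp only [integral_smul, setIntegral_tailKernel g ht.1]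
    _ = ∫ z in Ioi 0, ∫ t in 0..x, φ t • tailKernel g t z :=
        intervalIntegral_integral_swap (integrable_smul_tailKernel hg hφ hx)
    _ = ∫ z in Ioi 0, (∫ t in 0..min z x, φ t) • g z :=
        setIntegral_congr_fun measurableSet_Ioi fun z hz =>
          integral_smul_tailKernel g φ hx (le_of_lt hz)

theorem integral_smul_tailIntegral_by_parts {Φ : ℝ → ℝ}
    (hg : IntegrableOn (fun z => min z 1 • g z) (Ioi 0)) (hφ : Continuous φ)
    (hΦ : ∀ t, HasDerivAt Φ (φ t) t) (hΦ₀ : Φ 0 = 0) (hx : 0 ≤ x) :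
    ∫ t in 0..x, φ t • tailIntegral g t
      = (∫ z in Ioo 0 x, Φ z • g z) + Φ x • tailIntegral g x := by
  have h_primitive : ∀ m, ∫ t in 0..m, φ t = Φ m := fun m => by
    rw [intervalIntegral.integral_eq_sub_of_hasDerivAt (fun t _ => hΦ t)
      (hφ.intervalIntegrable 0 m), hΦ₀, sub_zero]
  have h_int := integrableOn_primitive_smul hg hφ hx
  rw [integral_smul_tailIntegral hg hφ hx]
  simp only [h_primitive] at h_int ⊢
  have h_below : EqOn (fun z => Φ (min z x) • g z) (fun z => Φ z • g z) (Ioc 0 x) :=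
    fun z hz => by simp only [min_eq_left hz.2]
  have h_above : EqOn (fun z => Φ (min z x) • g z) (fun z => Φ x • g z) (Ioi x) :=
    fun z (hz : x < z) => by simp only [min_eq_right hz.le]
  rw [← Ioc_union_Ioi_eq_Ioi hx] at h_int ⊢
  rw [setIntegral_union Ioc_disjoint_Ioi_same measurableSet_Ioi h_int.left_of_union
      h_int.right_of_union, setIntegral_congr_fun measurableSet_Ioc h_below,
    setIntegral_congr_fun measurableSet_Ioi h_above, integral_smul, integral_Ioc_eq_integral_Ioo,
    tailIntegral]

end Fubini

end Tail

section ExpConv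

open scoped Topology

variable {E : Type*} [NormedAddCommGroup E] [NormedSpace ℝ E] {g h : ℝ → E} {x : ℝ}

/-- The convolution `Q(x) = ∫_0^x e^{-(x - t)} h(t) dt` with the exponential profile, i.e. the
solution of `Q' = h - Q`, `Q(0) = 0`. -/
noncomputable def expConv (h : ℝ → E) (x : ℝ) : E := ∫ t in 0..x, exp (t - x) • h t

lemma hasDerivAt_exp_neg (x : ℝ) : HasDerivAt (fun y => exp (-y)) (-exp (-x)) x := by
  simpa using (hasDerivAt_neg x).exp

lemma expConv_eq_exp_neg_smul (h : ℝ → E) (x : ℝ) :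
    expConv h x = exp (-x) • ∫ t in 0..x, exp t • h t := by
  rw [expConv, ← intervalIntegral.integral_smul]
  simp only [smul_smul, ← exp_add, neg_add_eq_sub]

lemma hasDerivAt_expConv [CompleteSpace E] (h_int : IntervalIntegrable h volume 0 x)
    (h_meas : StronglyMeasurableAtFilter h (𝓝 x)) (h_cont : ContinuousAt h x) :
    HasDerivAt (expConv h) (h x - expConv h x) x := by
  obtain ⟨s, hs, hm⟩ := h_meas
  have h_integral : HasDerivAt (fun y => ∫ t in 0..y, exp t • h t) (exp x • h x) x :=
    intervalIntegral.integral_hasDerivAt_right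
      (h_int.continuousOn_smul continuous_exp.continuousOn)
      ⟨s, hs, continuous_exp.aestronglyMeasurable.smul hm⟩
      (continuous_exp.continuousAt.smul h_cont)
  rw [funext (expConv_eq_exp_neg_smul h)]
  refine ((hasDerivAt_exp_neg x).smul h_integral).congr_deriv ?_
  rw [smul_smul, ← exp_add, neg_add_cancel, exp_zero, one_smul, neg_smul, sub_eq_add_neg]

lemma abs_integral_exp_sub_le_min_one {m : ℝ} (hm : 0 ≤ m) (hmx : m ≤ x) :
    |∫ t in 0..m, exp (t - x)| ≤ min m 1 := by
  have h_eq : ∫ t in 0..m, exp (t - x) = exp (m - x) - exp (-x) := by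
    rw [intervalIntegral.integral_comp_sub_right (fun t => exp t), integral_exp, zero_sub]
  have h_le_one : exp (m - x) ≤ 1 := exp_le_one_iff.2 (sub_nonpos.2 hmx)
  have h_le_m : exp (m - x) - exp (-x) ≤ m :=
    calc exp (m - x) - exp (-x) = exp (m - x) * (1 - exp (-m)) := by
          rw [mul_sub, mul_one, ← exp_add]
          ring_nf
      _ ≤ 1 * m := by
          gcongr
          · exact sub_nonneg.2 (exp_le_one_iff.2 (neg_nonpos.2 hm))
          · linarith [one_sub_le_exp_neg m]
      _ = m := one_mul m
  rw [h_eq, abs_of_nonneg (sub_nonneg.2 (exp_le_exp.2 (by linarith)))]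
  exact le_min h_le_m (by linarith [exp_pos (-x)])

lemma norm_expConv_tailIntegral_le [CompleteSpace E]
    (hg : IntegrableOn (fun z => min z 1 • g z) (Ioi 0)) (hx : 0 ≤ x) :
    ‖expConv (tailIntegral g) x‖ ≤ ∫ z in Ioi 0, ‖min z 1 • g z‖ := by
  rw [expConv, integral_smul_tailIntegral hg (by fun_prop) hx]
  refine norm_integral_le_of_norm_le hg.norm ?_
  filter_upwards [ae_restrict_mem measurableSet_Ioi] with z (hz : 0 < z)
  rw [norm_smul, norm_smul, norm_of_nonneg (le_min hz.le zero_le_one)]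
  gcongr
  calc |∫ t in 0..min z x, exp (t - x)| ≤ min (min z x) 1 :=
        abs_integral_exp_sub_le_min_one (le_min hz.le hx) (min_le_right _ _)
    _ ≤ min z 1 := min_le_min_right 1 (min_le_left _ _)

lemma hasDerivAt_expConv_tailIntegral [CompleteSpace E]
    (hg : IntegrableOn (fun z => min z 1 • g z) (Ioi 0)) (hx : 0 < x) :
    HasDerivAt (expConv (tailIntegral g)) (tailIntegral g x - expConv (tailIntegral g) x) x :=
  have h_cont := continuousOn_tailIntegral hg
  hasDerivAt_expConv (intervalIntegrable_tailIntegral hg hx.le)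
    (h_cont.stronglyMeasurableAtFilter isOpen_Ioi x hx) (h_cont.continuousAt (Ioi_mem_nhds hx))

end ExpConv

section ODE

open scoped Topology

lemma exists_forall_eq_const_mul_of_hasDerivAt {s : Set ℝ} {a q r : ℝ → ℝ}
    (hs : IsOpen s) (hs' : IsPreconnected s) (hq : ∀ x ∈ s, HasDerivAt q (a x * q x) x)
    (hr : ∀ x ∈ s, HasDerivAt r (a x * r x) x) (hr₀ : ∀ x ∈ s, r x ≠ 0) :
    ∃ k, ∀ x ∈ s, q x = k * r x := by
  have h_ratio : ∀ x ∈ s, HasDerivAt (fun x => q x / r x) 0 x := fun x hx =>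
    ((hq x hx).div (hr x hx) (hr₀ x hx)).congr_deriv (by ring)
  obtain ⟨k, hk⟩ := hs.exists_is_const_of_deriv_eq_zero hs'
    (fun x hx => (h_ratio x hx).differentiableAt.differentiableWithinAt)
    (fun x hx => (h_ratio x hx).deriv)
  exact ⟨k, fun x hx => (div_eq_iff (hr₀ x hx)).1 (hk x hx)⟩

variable {G Q : ℝ → ℝ} {M : ℝ}

lemma eq_two_mul_div_of_hasDerivAt
    (hG : ∀ x, 0 < x → HasDerivAt G (-(2 / x ^ 2 * ((1 + x) * Q x - x * G x))) x)
    (hQ : ∀ x, 0 < x → HasDerivAt Q (G x - Q x) x) (hG_lim : Tendsto G atTop (𝓝 0))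
    (hQ_bdd : ∀ x, 0 < x → |Q x| ≤ M) {x : ℝ} (hx : 0 < x) : G x = 2 * Q x / x := by
  have h_deriv : ∀ x ∈ Ioi (0 : ℝ), HasDerivAt (fun x => G x - 2 * Q x / x) 0 x :=
    fun x (hx : 0 < x) => by
      refine ((hG x hx).sub (((hQ x hx).const_mul 2).div (hasDerivAt_id x) hx.ne')).congr_deriv ?_
      simp only [id]
      field_simp
      ring
  obtain ⟨C, hC⟩ := isOpen_Ioi.exists_is_const_of_deriv_eq_zero isPreconnected_Ioi
    (fun x hx => (h_deriv x hx).differentiableAt.differentiableWithinAt)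
    (fun x hx => (h_deriv x hx).deriv)
  have hQ_lim : Tendsto (fun x => Q x * x⁻¹) atTop (𝓝 0) :=
    bdd_le_mul_tendsto_zero' M ((eventually_gt_atTop 0).mono hQ_bdd) tendsto_inv_atTop_zero
  have h_lim : Tendsto (fun x => G x - 2 * Q x / x) atTop (𝓝 0) := by
    simpa only [mul_assoc, div_eq_mul_inv, mul_zero, sub_zero] using
      hG_lim.sub (hQ_lim.const_mul 2)
  have hC₀ : C = 0 := tendsto_nhds_unique
    (tendsto_const_nhds.congr' <| (eventually_gt_atTop 0).mono fun x hx => (hC x hx).symm) h_lim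
  exact sub_eq_zero.1 ((hC x hx).trans hC₀)

lemma exists_eq_of_hasDerivAt
    (hG : ∀ x, 0 < x → HasDerivAt G (-(2 / x ^ 2 * ((1 + x) * Q x - x * G x))) x)
    (hQ : ∀ x, 0 < x → HasDerivAt Q (G x - Q x) x) (hG_lim : Tendsto G atTop (𝓝 0))
    (hQ_bdd : ∀ x, 0 < x → |Q x| ≤ M) :
    ∃ k, ∀ x, 0 < x → G x = k * (2 * x * exp (-x)) ∧ Q x = k * (x ^ 2 * exp (-x)) := by
  have h_GQ : ∀ x, 0 < x → G x = 2 * Q x / x := fun x hx =>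
    eq_two_mul_div_of_hasDerivAt hG hQ hG_lim hQ_bdd hx
  have h_sol : ∀ x ∈ Ioi (0 : ℝ),
      HasDerivAt (fun x => x ^ 2 * exp (-x)) ((2 / x - 1) * (x ^ 2 * exp (-x))) x :=
    fun x (hx : 0 < x) => by
      refine ((hasDerivAt_pow 2 x).mul (hasDerivAt_exp_neg x)).congr_deriv ?_
      field_simp
      ring
  obtain ⟨k, hk⟩ := exists_forall_eq_const_mul_of_hasDerivAt isOpen_Ioi isPreconnected_Ioi
    (fun x hx => (hQ x hx).congr_deriv (by rw [h_GQ x hx]; ring)) h_sol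
    (fun x (hx : 0 < x) => by positivity)
  refine ⟨k, fun x hx => ⟨?_, hk x hx⟩⟩
  rw [h_GQ x hx, hk x hx]
  field_simp

end ODE

section LinearisedOperator

open scoped Topology

variable {g : ℝ → ℝ} {x : ℝ}

/-- The nonlocal part of the linearised coagulation operator, `g ↦ g - L[g]`, expressed through the
tail `G` of `g` and its convolution `Q` as `(2 / x²) ((1 + x) Q(x) - x G(x))`. -/
noncomputable def nonlocalPart (g : ℝ → ℝ) (x : ℝ) : ℝ :=
  2 / x ^ 2 * ((1 + x) * expConv (tailIntegral g) x - x * tailIntegral g x)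

lemma integral_Ioi_gain (hg : IntegrableOn (fun z => min z 1 * g z) (Ioi 0)) {s : ℝ}
    (hs : 0 < s) (y : ℝ) :
    ∫ z in Ioi s, (y * exp (-y) * g z + y * g y * exp (-z))
      = y * exp (-y) * tailIntegral g s + y * g y * exp (-s) := by
  rw [integral_add ((integrableOn_Ioi_of_min_one_smul hg hs).const_mul _)
      ((integrableOn_exp_neg_Ioi s).const_mul _),
    integral_const_mul, integral_const_mul, integral_exp_neg_Ioi, tailIntegral]

lemma hasDerivAt_mul_exp_sub (x t : ℝ) :
    HasDerivAt (fun t => t * exp (t - x)) ((1 + t) * exp (t - x)) t := by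
  refine ((hasDerivAt_id t).mul ((hasDerivAt_id t).sub_const x).exp).congr_deriv ?_
  simp only [id]
  ring

lemma integrableOn_mul_exp_sub_mul (hg : IntegrableOn (fun z => min z 1 * g z) (Ioi 0)) (x : ℝ) :
    IntegrableOn (fun y => y * exp (y - x) * g y) (Ioo 0 x) :=
  integrableOn_smul_of_abs_le_mul_min_one (C := max x 1) hg (by fun_prop) measurableSet_Ioo
    Ioo_subset_Ioi_self fun y hy => by
      have hy₀ : 0 ≤ y := hy.1.le
      have h_exp : exp (y - x) ≤ 1 := exp_le_one_iff.2 (sub_nonpos.2 hy.2.le)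
      calc |y * exp (y - x)| = y * exp (y - x) := abs_of_nonneg (by positivity)
        _ ≤ y := mul_le_of_le_one_right hy₀ h_exp
        _ = min y x := (min_eq_left hy.2.le).symm
        _ ≤ max x 1 * min y 1 := min_le_max_one_mul_min_one x hy.1

lemma setIntegral_Ioo_mul_exp_neg_mul_comp_sub (G : ℝ → ℝ) (hx : 0 ≤ x) :
    ∫ y in Ioo 0 x, y * exp (-y) * G (x - y) = ∫ t in 0..x, (x - t) * exp (t - x) * G t := by
  rw [← integral_Ioc_eq_integral_Ioo, ← intervalIntegral.integral_of_le hx]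
  simpa only [sub_sub_cancel, sub_sub_cancel_left, sub_self, sub_zero] using
    intervalIntegral.integral_comp_sub_left (a := 0) (b := x)
      (fun t => (x - t) * exp (t - x) * G t) x

lemma integrableOn_mul_exp_neg_mul_comp_sub {G : ℝ → ℝ} (hG : IntervalIntegrable G volume 0 x)
    (hx : 0 ≤ x) : IntegrableOn (fun y => y * exp (-y) * G (x - y)) (Ioo 0 x) := by
  have h_comp : IntervalIntegrable (fun y => G (x - y)) volume 0 x := by
    simpa only [sub_self, sub_zero] using (hG.comp_sub_left x).symm
  rw [← integrableOn_Ioc_iff_integrableOn_Ioo, ← intervalIntegrable_iff_integrableOn_Ioc_of_le hx]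
  exact h_comp.continuousOn_mul (by fun_prop)

theorem integral_integral_gain (hg : IntegrableOn (fun z => min z 1 * g z) (Ioi 0)) (hx : 0 < x) :
    ∫ y in Ioo 0 x, ∫ z in Ioi (x - y), (y * exp (-y) * g z + y * g y * exp (-z))
      = (1 + x) * expConv (tailIntegral g) x - x * tailIntegral g x := by
  set G := tailIntegral g
  have hG_int : IntervalIntegrable G volume 0 x := intervalIntegrable_tailIntegral hg hx.le
  have h_parts : ∫ t in 0..x, (1 + t) * exp (t - x) * G t
      = (∫ y in Ioo 0 x, y * exp (y - x) * g y) + x * G x := by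
    simpa only [smul_eq_mul, sub_self, exp_zero, mul_one] using
      integral_smul_tailIntegral_by_parts hg (by fun_prop) (hasDerivAt_mul_exp_sub x)
        (zero_mul _) hx.le
  calc ∫ y in Ioo 0 x, ∫ z in Ioi (x - y), (y * exp (-y) * g z + y * g y * exp (-z))
      = ∫ y in Ioo 0 x, (y * exp (-y) * G (x - y) + y * exp (y - x) * g y) := by
        refine setIntegral_congr_fun measurableSet_Ioo fun y hy => ?_
        simp only [integral_Ioi_gain hg (sub_pos.2 hy.2), neg_sub]
        ring
    _ = (∫ t in 0..x, (x - t) * exp (t - x) * G t)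
          + (∫ t in 0..x, (1 + t) * exp (t - x) * G t) - x * G x := by
        rw [integral_add (integrableOn_mul_exp_neg_mul_comp_sub hG_int hx.le)
          (integrableOn_mul_exp_sub_mul hg x), setIntegral_Ioo_mul_exp_neg_mul_comp_sub G hx.le,
          h_parts]
        ring
    _ = (1 + x) * expConv G x - x * G x := by
        rw [← intervalIntegral.integral_add, expConv, ← intervalIntegral.integral_const_mul]
        · congr 2 with t
          simp only [smul_eq_mul]
          ring
        · exact hG_int.continuousOn_mul (by fun_prop)
        · exact hG_int.continuousOn_mul (by fun_prop)

lemma Lop_eq_sub_nonlocalPart (hg : IntegrableOn (fun z => min z 1 * g z) (Ioi 0)) (hx : 0 < x) :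
    Lop g x = g x - nonlocalPart g x := by
  rw [Lop, integral_integral_gain hg hx, nonlocalPart]

lemma continuousOn_nonlocalPart (hg : IntegrableOn (fun z => min z 1 * g z) (Ioi 0)) :
    ContinuousOn (nonlocalPart g) (Ioi 0) := by
  have hG : ContinuousOn (tailIntegral g) (Ioi 0) := continuousOn_tailIntegral hg
  have hQ : ContinuousOn (expConv (tailIntegral g)) (Ioi 0) := fun x hx =>
    (hasDerivAt_expConv_tailIntegral hg hx).continuousAt.continuousWithinAt
  unfold nonlocalPart
  exact (continuousOn_const.div (by fun_prop) fun x hx => pow_ne_zero 2 (ne_of_gt hx)).mul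
    (by fun_prop)

theorem exists_ae_eq_of_Lop_ae_eq_zero (hg : IntegrableOn (fun z => min z 1 * g z) (Ioi 0))
    (h : ∀ᵐ x ∂volume.restrict (Ioi 0), Lop g x = 0) :
    ∃ c : ℝ, ∀ᵐ x ∂volume.restrict (Ioi 0), g x = c * ((1 - x) * exp (-x)) := by
  have h_fixed : ∀ᵐ x ∂volume.restrict (Ioi 0), g x = nonlocalPart g x := by
    filter_upwards [h, ae_restrict_mem measurableSet_Ioi] with x hx hx₀
    rwa [Lop_eq_sub_nonlocalPart hg hx₀, sub_eq_zero] at hx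
  obtain ⟨k, hk⟩ := exists_eq_of_hasDerivAt
    (fun x hx => hasDerivAt_tailIntegral_of_ae_eq hg (continuousOn_nonlocalPart hg) h_fixed hx)
    (fun x hx => hasDerivAt_expConv_tailIntegral hg hx) (tendsto_tailIntegral_atTop g)
    (fun x hx => norm_expConv_tailIntegral_le hg (le_of_lt hx))
  refine ⟨-2 * k, ?_⟩
  filter_upwards [h_fixed, ae_restrict_mem measurableSet_Ioi] with x hx (hx₀ : 0 < x)
  rw [hx, nonlocalPart, (hk x hx₀).1, (hk x hx₀).2]
  field_simp
  ring

lemma tailIntegral_eq_of_ae_eq (hg : IntegrableOn (fun z => min z 1 * g z) (Ioi 0)) {c : ℝ}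
    (h : ∀ᵐ x ∂volume.restrict (Ioi 0), g x = c * ((1 - x) * exp (-x))) {t : ℝ} (ht : 0 < t) :
    tailIntegral g t = -c * (t * exp (-t)) := by
  have h_ae := ae_restrict_of_ae_restrict_of_subset (Ioi_subset_Ioi ht.le) h
  have h_int : IntegrableOn (fun x => c * ((1 - x) * exp (-x))) (Ioi t) :=
    (integrableOn_Ioi_of_min_one_smul hg ht).congr h_ae
  have h_deriv : ∀ x ∈ Ici t,
      HasDerivAt (fun x => c * (x * exp (-x))) (c * ((1 - x) * exp (-x))) x := fun x _ => by
    refine (((hasDerivAt_id x).mul (hasDerivAt_exp_neg x)).const_mul c).congr_deriv ?_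
    simp only [id]
    ring
  have h_lim : Tendsto (fun x => c * (x * exp (-x))) atTop (𝓝 0) := by
    simpa using (tendsto_pow_mul_exp_neg_atTop_nhds_zero 1).const_mul c
  rw [tailIntegral, integral_congr_ae h_ae,
    integral_Ioi_of_hasDerivAt_of_tendsto' h_deriv h_int h_lim]
  ring

theorem Lop_ae_eq_zero_of_ae_eq (hg : IntegrableOn (fun z => min z 1 * g z) (Ioi 0)) {c : ℝ}
    (h : ∀ᵐ x ∂volume.restrict (Ioi 0), g x = c * ((1 - x) * exp (-x))) :
    ∀ᵐ x ∂volume.restrict (Ioi 0), Lop g x = 0 := by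
  have hG : ∀ t, 0 < t → tailIntegral g t = -c * (t * exp (-t)) := fun t ht =>
    tailIntegral_eq_of_ae_eq hg h ht
  have hQ : ∀ x, 0 < x → expConv (tailIntegral g) x = -c * (x ^ 2 / 2 * exp (-x)) := by
    intro x hx
    have h_integrand : ∀ t ∈ uIoc 0 x, exp t * tailIntegral g t = -c * t := fun t ht => by
      rw [uIoc_of_le hx.le] at ht
      have h_exp : exp t * exp (-t) = 1 := by rw [← exp_add, add_neg_cancel, exp_zero]
      rw [hG t ht.1]
      linear_combination (-c * t) * h_exp
    rw [expConv_eq_exp_neg_smul]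
    simp only [smul_eq_mul]
    rw [intervalIntegral.integral_congr_ae (ae_of_all _ h_integrand),
      intervalIntegral.integral_const_mul, integral_id]
    ring
  filter_upwards [h, ae_restrict_mem measurableSet_Ioi] with x hx (hx₀ : 0 < x)
  rw [Lop_eq_sub_nonlocalPart hg hx₀, nonlocalPart, hG x hx₀, hQ x hx₀, hx]
  field_simp
  ring

end LinearisedOperator

theorem stmt12_general {a b : ℝ} (ha : a ≤ 1) (hb : 0 ≤ b) {g : ℝ → ℝ} (hg : MemX a b g) :
    (∀ᵐ x ∂volume.restrict (Ioi 0), Lop g x = 0) ↔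
      ∃ c : ℝ, ∀ᵐ x ∂volume.restrict (Ioi 0), g x = c * ((1 - x) * exp (-x)) :=
  have hg' := hg.integrableOn_min_one_mul ha hb
  ⟨exists_ae_eq_of_Lop_ae_eq_zero hg', fun ⟨_, hc⟩ => Lop_ae_eq_zero_of_ae_eq hg' hc⟩

theorem stmt12 (a b : ℝ) (ha : a ∈ Ioo (-1:ℝ) 1) (hb : 1 < b)
    (g : ℝ → ℝ) (hg : MemX a b g) :
    (∀ᵐ x ∂(volume.restrict (Ioi (0:ℝ))), Lop g x = 0) ↔
      ∃ c : ℝ, ∀ᵐ x ∂(volume.restrict (Ioi (0:ℝ))), g x = c * ((1 - x) * exp (-x)) :=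
  stmt12_general ha.2.le (zero_le_one.trans hb.le) hg
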